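/- For q even, every finite-dimensional complex representation of SL(2, F_q) admits a nondegenerate invariant symmetric bilinear form; equivalently, every complex representation of SL(2, F_q) is realizable over ℝ. -/

import Mathlib

open Matrix

/-! Let `U` be the elementary abelian `2`-group of upper unitriangular matrices. An irreducible
representation on which `U` acts nontrivially has a vector `v` and a functional `l`, `l v ≠ 0`, on
which `U` acts through the same nontrivial character `ψ : U → {±1}`, so `f g = l (g v)` satisfies
`f (x g) = ψ x f g = f (g x)` for `x ∈ U`. In characteristic `2` every `g` off the Borel subgroup
satisfies `g⁻¹ = x g x` for some `x ∈ U`, every `g ∈ U` is its own inverse, and nontriviality of `ψ`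
forces `f` to vanish on the rest of the Borel subgroup. Hence `f g⁻¹ = f g`, and then
`(g v, h v) ↦ f (g⁻¹ h)` extends to an invariant symmetric form, nondegenerate by irreducibility.
If `U` acts trivially then so does the whole group, which is the normal closure of `U`. -/

section Orthogonal

open Submodule

variable {k G V : Type*} [Field k] [Group G] [AddCommGroup V] [Module k V]

/-- Orthogonality of a representation, of arbitrary dimension: it preserves a nondegenerate
symmetric bilinear form. -/
def IsOrthogonalRep (π : Representation k G V) : Prop :=
  ∃ B : LinearMap.BilinForm k V,
    B.IsSymm ∧ (∀ g v w, B (π g v) (π g w) = B v w) ∧ B.Nondegenerate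

theorem span_orbit_eq_top (π : Representation k G V) [π.IsIrreducible] {v : V}
    (hv : v ≠ 0) : span k (Set.range fun g => π g v) = ⊤ := by
  let orbitSpan : Subrepresentation π :=
    { toSubmodule := span k (Set.range fun g => π g v)
      apply_mem_toSubmodule g := by
        suffices span k (Set.range fun h => π h v) ≤
            (span k (Set.range fun h => π h v)).comap (π g) from fun _ hx => this hx
        refine span_le.2 (Set.range_subset_iff.2 fun h => subset_span ⟨g * h, ?_⟩)
        simp only [map_mul, Module.End.mul_apply] }
  have hmem : v ∈ orbitSpan := subset_span ⟨1, by simp⟩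
  rcases eq_bot_or_eq_top orbitSpan with h | h
  · exact absurd (by rwa [h] at hmem) hv
  · exact congrArg Subrepresentation.toSubmodule h

theorem exists_bilinForm_of_matrixCoeff_inv {π : Representation k G V} {v : V}
    {l : Module.Dual k V} (hspan : span k (Set.range fun g => π g v) = ⊤)
    (hinv : ∀ g, l (π g⁻¹ v) = l (π g v)) :
    ∃ B : LinearMap.BilinForm k V, ∀ w g, B w (π g v) = l (π g⁻¹ w) := by
  let S := Finsupp.linearCombination k fun g => π g v
  let D := Finsupp.linearCombination k fun g => l ∘ₗ π g⁻¹
  have hD : ∀ a g, D a (π g v) = l (π g⁻¹ (S a)) := by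
    intro a g
    induction a using Finsupp.induction_linear with
    | zero => simp
    | add a b ha hb => simp [ha, hb]
    | single h c =>
      have := hinv (g⁻¹ * h)
      simp only [map_mul, _root_.mul_inv_rev, inv_inv, Module.End.mul_apply] at this
      simp [D, S, this]
  obtain ⟨s, hs⟩ := S.exists_rightInverse_of_surjective
    (by rw [Finsupp.range_linearCombination, hspan])
  refine ⟨D ∘ₗ s, fun w g => ?_⟩
  rw [LinearMap.comp_apply, hD, ← LinearMap.comp_apply S, hs, LinearMap.id_apply]

theorem IsOrthogonalRep.of_matrixCoeff_inv {π : Representation k G V} [π.IsIrreducible] {v : V}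
    {l : Module.Dual k V} (hlv : l v ≠ 0) (hinv : ∀ g, l (π g⁻¹ v) = l (π g v)) :
    IsOrthogonalRep π := by
  have hspan := span_orbit_eq_top π (v := v) (by rintro rfl; exact hlv (map_zero l))
  obtain ⟨B, hB⟩ := exists_bilinForm_of_matrixCoeff_inv hspan hinv
  have hBorbit : ∀ g h, B (π g v) (π h v) = l (π (h⁻¹ * g) v) := by simp [hB]
  have hsymm : B.IsSymm := by
    suffices B = LinearMap.flip B from ⟨fun x y => LinearMap.congr_fun₂ this x y⟩
    refine LinearMap.ext_on_range hspan fun g => LinearMap.ext_on_range hspan fun h => ?_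
    rw [LinearMap.flip_apply, hBorbit, hBorbit, ← hinv, _root_.mul_inv_rev, inv_inv]
  have hinvB : ∀ g x y, B (π g x) (π g y) = B x y := by
    intro g
    suffices B.compl₁₂ (π g) (π g) = B from fun x y => LinearMap.congr_fun₂ this x y
    refine LinearMap.ext_on_range hspan fun h => LinearMap.ext_on_range hspan fun h' => ?_
    rw [LinearMap.compl₁₂_apply, ← Module.End.mul_apply, ← Module.End.mul_apply, ← map_mul,
      ← map_mul, hBorbit, hBorbit]
    group
  let radical : Subrepresentation π :=
    { toSubmodule := LinearMap.ker B
      apply_mem_toSubmodule g x hx := by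
        ext y
        have := hinvB g x (π g⁻¹ y)
        rw [π.self_inv_apply, LinearMap.mem_ker.1 hx] at this
        simpa using this }
  have hradical : radical = ⊥ := by
    refine (eq_bot_or_eq_top radical).resolve_right fun htop => hlv ?_
    have hv : v ∈ radical := htop ▸ Submodule.mem_top (R := k)
    have hBv : B v = 0 := hv
    simpa [hBv] using (hB v 1).symm
  refine ⟨B, hsymm, hinvB, hsymm.isRefl.nondegenerate_iff_separatingLeft.2 ?_⟩
  rw [LinearMap.separatingLeft_iff_ker_eq_bot]
  exact congrArg Subrepresentation.toSubmodule hradical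

theorem IsOrthogonalRep.of_forall_apply_eq_one {π : Representation k G V} (hπ : ∀ g, π g = 1) :
    IsOrthogonalRep π := by
  classical
  let b := Module.Basis.ofVectorSpace k V
  have hsymm : LinearMap.BilinForm.IsSymm b.toDual := by
    suffices b.toDual = LinearMap.flip b.toDual from ⟨fun x y => LinearMap.congr_fun₂ this x y⟩
    exact b.ext fun i => b.ext fun j => by simp [Module.Basis.toDual_apply, eq_comm]
  refine ⟨b.toDual, hsymm, fun g x y => by rw [hπ, Module.End.one_apply, Module.End.one_apply], ?_⟩
  refine hsymm.isRefl.nondegenerate_iff_separatingLeft.2 ?_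
  exact LinearMap.separatingLeft_iff_ker_eq_bot.2 b.toDual_ker

theorem IsOrthogonalRep.of_equiv {W : Type*} [AddCommGroup W] [Module k W]
    {π : Representation k G V} {ρ : Representation k G W} (e : π.Equiv ρ)
    (hπ : IsOrthogonalRep π) : IsOrthogonalRep ρ := by
  obtain ⟨B, hsymm, hinv, hnondeg⟩ := hπ
  let f := e.symm.toLinearEquiv
  have hf : ∀ g w, f (ρ g w) = π g (f w) := fun g w =>
    Representation.IntertwiningMap.isIntertwining _ _ e.symm.toIntertwiningMap g w
  exact ⟨B.congr f.symm, ⟨fun x y => hsymm.eq _ _⟩,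
    fun g x y => by simp [hf, hinv], hnondeg.congr _⟩

theorem IsOrthogonalRep.directSum {ι : Type*} {M : ι → Type*} [∀ i, AddCommGroup (M i)]
    [∀ i, Module k (M i)] {π : ∀ i, Representation k G (M i)}
    (h : ∀ i, IsOrthogonalRep (π i)) : IsOrthogonalRep (Representation.directSum π) := by
  classical
  choose B hsymm hinv hnondeg using h
  let C : LinearMap.BilinForm k (DirectSum ι M) :=
    DirectSum.toModule k ι _ fun i => (DirectSum.component k ι M i).dualMap ∘ₗ B i
  have hC : ∀ i x y, C (DirectSum.lof k ι M i x) y = B i x (y i) := by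
    intro i x y
    simp only [C, DirectSum.toModule_lof]
    rfl
  have hCne : ∀ i j, i ≠ j → ∀ x y,
      C (DirectSum.lof k ι M i x) (DirectSum.lof k ι M j y) = 0 := by
    intro i j hij x y
    rw [hC, DirectSum.lof_eq_of k ι M j, DirectSum.of_eq_of_ne _ _ _ hij, map_zero]
  have hCsymm : C.IsSymm := by
    suffices C = LinearMap.flip C from ⟨fun x y => LinearMap.congr_fun₂ this x y⟩
    ext i x j y
    obtain rfl | hij := eq_or_ne i j
    · simp [hC, DirectSum.lof_apply, (hsymm i).eq x y]
    · simp [hCne i j hij, hCne j i hij.symm]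
  refine ⟨C, hCsymm, fun g => ?_, hCsymm.isRefl.nondegenerate_iff_separatingRight.2 fun y hy => ?_⟩
  · suffices C.compl₁₂ (Representation.directSum π g) (Representation.directSum π g) = C from
      fun x y => LinearMap.congr_fun₂ this x y
    ext i x j y
    obtain rfl | hij := eq_or_ne i j
    · simp [hC, Representation.directSum, DirectSum.lof_apply, hinv]
    · simp [Representation.directSum, hCne i j hij]
  · ext i
    exact (hnondeg i).2 (y i) fun x => (hC i x y).symm.trans (hy _)

theorem isIrreducible_toRepresentation {π : Representation k G V} {W : Subrepresentation π}
    (hW : IsAtom W) : W.toRepresentation.IsIrreducible := by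
  have := nontrivial_iff_ne_bot.2
    fun h => hW.1 (Subrepresentation.toSubmodule_injective h)
  have : Nontrivial (Subrepresentation W.toRepresentation) :=
    ⟨⊥, ⊤, fun h => bot_ne_top (congrArg Subrepresentation.toSubmodule h)⟩
  refine ⟨fun U => ?_⟩
  let image : Subrepresentation π :=
    { toSubmodule := U.toSubmodule.map W.toSubmodule.subtype
      apply_mem_toSubmodule := by
        rintro g _ ⟨x, hx, rfl⟩
        exact ⟨_, U.apply_mem_toSubmodule g hx, rfl⟩ }
  have himage : image ≤ W := by
    rintro _ ⟨x, -, rfl⟩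
    exact x.2
  refine (hW.le_iff.1 himage).imp (fun h => ?_) fun h => ?_ <;>
    refine Subrepresentation.toSubmodule_injective ?_
  · exact map_injective_of_injective W.toSubmodule.injective_subtype <|
      (congrArg Subrepresentation.toSubmodule h).trans (Submodule.map_bot _).symm
  · exact map_injective_of_injective W.toSubmodule.injective_subtype <|
      (congrArg Subrepresentation.toSubmodule h).trans (map_subtype_top _).symm

theorem IsOrthogonalRep.of_isInternal {π : Representation k G V} {ι : Type*}
    [DecidableEq ι] {W : ι → Subrepresentation π}
    (hW : DirectSum.IsInternal fun i => (W i).toSubmodule)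
    (h : ∀ i, IsOrthogonalRep (W i).toRepresentation) : IsOrthogonalRep π := by
  let e := LinearEquiv.ofBijective (DirectSum.coeLinearMap fun i => (W i).toSubmodule) hW
  refine (IsOrthogonalRep.directSum h).of_equiv (Representation.Equiv.mk e fun g => ?_)
  ext i x
  have he : ∀ y, e (DirectSum.lof k ι _ i y) = y :=
    DirectSum.coeLinearMap_lof (fun i => (W i).toSubmodule) i
  simp [Representation.directSum, Subrepresentation.toRepresentation, he]

theorem IsOrthogonalRep.of_forall_isIrreducible (π : Representation k G V)
    [hπ : π.IsSemisimpleRepresentation]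
    (h : ∀ W : Subrepresentation π, W.toRepresentation.IsIrreducible →
      IsOrthogonalRep W.toRepresentation) : IsOrthogonalRep π := by
  classical
  have := π.isSemisimpleRepresentation_iff_isSemisimpleModule_asModule.1 hπ
  obtain ⟨s, hindep, htop, hsimple⟩ :=
    IsSemisimpleModule.exists_sSupIndep_sSup_simples_eq_top (MonoidAlgebra k G) π.asModule
  have hinternal := DirectSum.isInternal_submodule_of_iSupIndep_of_iSup_eq_top
    ((sSupIndep_iff s).1 hindep) (sSup_eq_iSup' s ▸ htop)
  refine IsOrthogonalRep.of_isInternal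
    (W := fun m : s => Subrepresentation.subrepresentationSubmoduleOrderIso.symm m.1)
    hinternal fun m => h _ (isIrreducible_toRepresentation ?_)
  rw [OrderIso.isAtom_iff, ← isSimpleModule_iff_isAtom]
  exact hsimple m m.2

end Orthogonal

section SignCharacters

variable {k U V : Type*} [Field k] [CommGroup U] [Fintype U] [AddCommGroup V] [Module k V]

/-- The unnormalized projection `∑ a, ψ a • ρ a` onto the `ψ`-isotypic part of `ρ`, for a character
`ψ` with values `±1` (encoded as `ℤˣ`, which acts on every module). -/
def signProjection (ρ : Representation k U V) (ψ : U →* ℤˣ) : Module.End k V :=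
  ∑ a, ψ a • ρ a

theorem apply_mul_signProjection (ρ : Representation k U V) (ψ : U →* ℤˣ) (b : U) :
    ρ b * signProjection ρ ψ = ψ b • signProjection ρ ψ := by
  simp only [signProjection, Finset.mul_sum, Finset.smul_sum]
  refine Fintype.sum_equiv (Equiv.mulLeft b) _ _ fun a => ?_
  simp [mul_smul_comm, smul_smul, ← mul_assoc, Int.units_mul_self]

theorem signProjection_mul_apply (ρ : Representation k U V) (ψ : U →* ℤˣ) (b : U) :
    signProjection ρ ψ * ρ b = ψ b • signProjection ρ ψ := by
  rw [← apply_mul_signProjection]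
  simp only [signProjection, Finset.mul_sum, Finset.sum_mul, smul_mul_assoc, mul_smul_comm,
    ← map_mul, mul_comm b]

theorem signProjection_mul_self (ρ : Representation k U V) (ψ : U →* ℤˣ) :
    signProjection ρ ψ * signProjection ρ ψ = Fintype.card U • signProjection ρ ψ := by
  nth_rw 1 [signProjection]
  simp [Finset.sum_mul, smul_mul_assoc, apply_mul_signProjection, smul_smul, Int.units_mul_self]

theorem sum_signCharacter_apply [Fintype (U →* ℤˣ)] [DecidableEq U]
    (hU : Monoid.exponent U ∣ 2) (a : U) :
    ∑ ψ : U →* ℤˣ, (ψ a : ℤ) = if a = 1 then (Fintype.card U : ℤ) else 0 := by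
  have : HasEnoughRootsOfUnity ℤ 2 :=
    ⟨⟨-1, IsPrimitiveRoot.neg_one 0 (by norm_num)⟩, inferInstance⟩
  have : HasEnoughRootsOfUnity ℤ (Monoid.exponent U) := .of_dvd _ hU
  split_ifs with ha
  · subst ha
    simp [← Nat.card_eq_fintype_card, CommGroup.card_monoidHom_of_hasEnoughRootsOfUnity U ℤ]
  · obtain ⟨ψ, hψ⟩ := CommGroup.exists_apply_ne_one_of_hasEnoughRootsOfUnity U ℤ ha
    refine sum_hom_units_eq_zero ((Units.coeHom ℤ).comp (MonoidHom.eval a)) fun h => hψ ?_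
    exact Units.ext (DFunLike.congr_fun h ψ)

theorem sum_signProjection [Fintype (U →* ℤˣ)] (hU : Monoid.exponent U ∣ 2)
    (ρ : Representation k U V) :
    ∑ ψ, signProjection ρ ψ = Fintype.card U • 1 := by
  classical
  simp only [signProjection, Units.smul_def]
  rw [Finset.sum_comm]
  simp only [← Finset.sum_smul, sum_signCharacter_apply hU, ite_smul, zero_smul, natCast_zsmul,
    Fintype.sum_ite_eq', map_one]

theorem exists_sign_eigenvector [NeZero (Fintype.card U : k)] (hU : Monoid.exponent U ∣ 2)
    {ρ : Representation k U V} (hρ : ∃ u, ρ u ≠ 1) :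
    ∃ ψ : U →* ℤˣ, ψ ≠ 1 ∧ ∃ (v : V) (l : Module.Dual k V), l v ≠ 0 ∧
      (∀ u, ρ u v = ψ u • v) ∧ ∀ u w, l (ρ u w) = ψ u • l w := by
  obtain ⟨b, hb⟩ := hρ
  cases nonempty_fintype (U →* ℤˣ)
  obtain ⟨ψ, hψ⟩ : ∃ ψ, signProjection ρ ψ * (ρ b - 1) ≠ 0 := by
    by_contra! h
    have hsum : ∑ ψ, signProjection ρ ψ * (ρ b - 1) = 0 := Finset.sum_eq_zero fun ψ _ => h ψ
    rw [← Finset.sum_mul, sum_signProjection hU, smul_mul_assoc, one_mul,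
      ← Nat.cast_smul_eq_nsmul k] at hsum
    exact hb (sub_eq_zero.1 ((smul_eq_zero.1 hsum).resolve_left (NeZero.ne _)))
  have hψ1 : ψ ≠ 1 := by
    rintro rfl
    simp [mul_sub, signProjection_mul_apply] at hψ
  obtain ⟨x, hx⟩ : ∃ x, signProjection ρ ψ x ≠ 0 := by
    by_contra! h
    exact hψ (by rw [show signProjection ρ ψ = 0 from LinearMap.ext h, zero_mul])
  obtain ⟨l, hl⟩ : ∃ l : Module.Dual k V, l (signProjection ρ ψ x) ≠ 0 := by
    simpa using (Module.forall_dual_apply_eq_zero_iff k _).not.2 hx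
  refine ⟨ψ, hψ1, signProjection ρ ψ x, l ∘ₗ signProjection ρ ψ, ?_, ?_, fun u w => ?_⟩
  · rw [LinearMap.comp_apply, ← Module.End.mul_apply, signProjection_mul_self,
      ← Nat.cast_smul_eq_nsmul k, LinearMap.smul_apply, map_smul, smul_eq_mul]
    exact mul_ne_zero (NeZero.ne _) hl
  · exact fun u => LinearMap.congr_fun (apply_mul_signProjection ρ ψ u) x
  · rw [LinearMap.comp_apply, ← Module.End.mul_apply, signProjection_mul_apply, Units.smul_def,
      LinearMap.smul_apply, map_zsmul, LinearMap.comp_apply, Units.smul_def]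

end SignCharacters

section SpecialLinear

open Matrix.SpecialLinearGroup

variable {R : Type*} [CommRing R]

/-- The subgroup of upper unitriangular matrices of `SL(2, R)`, presented as a homomorphism from the
additive group of `R`, which is written multiplicatively. -/
def upperUnipotent (R : Type*) [CommRing R] : Multiplicative R →* SpecialLinearGroup (Fin 2) R where
  toFun x := transvection zero_ne_one x.toAdd
  map_one' := transvection_coeff_zero _
  map_mul' _ _ := transvection_add _ _ _

theorem coe_upperUnipotent (x : Multiplicative R) :
    (upperUnipotent R x : Matrix (Fin 2) (Fin 2) R) = !![1, x.toAdd; 0, 1] := by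
  ext i j
  fin_cases i <;> fin_cases j <;> simp [upperUnipotent, transvection_coe]

theorem mul_diag_eq_one_of_upperTriangular {g : SpecialLinearGroup (Fin 2) R}
    (hg : g 1 0 = 0) : g 0 0 * g 1 1 = 1 := by
  simpa [hg] using (det_fin_two g.1).symm.trans g.2

theorem mul_upperUnipotent_of_upperTriangular {g : SpecialLinearGroup (Fin 2) R} (hg : g 1 0 = 0)
    (x : R) : g * upperUnipotent R (.ofAdd x) = upperUnipotent R (.ofAdd (g 0 0 ^ 2 * x)) * g := by
  have hdet := mul_diag_eq_one_of_upperTriangular hg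
  ext i j
  fin_cases i <;> fin_cases j <;>
    simp [coe_upperUnipotent, Matrix.mul_apply, Fin.sum_univ_two, hg]
  linear_combination (-g 0 0 * x) * hdet

theorem inv_eq_self_of_upperTriangular_of_sq_eq_one [CharP R 2] {g : SpecialLinearGroup (Fin 2) R}
    (hg : g 1 0 = 0) (ha : g 0 0 ^ 2 = 1) : g⁻¹ = g := by
  have hdet := mul_diag_eq_one_of_upperTriangular hg
  have hdiag : g 1 1 = g 0 0 := by linear_combination g 0 0 * hdet - g 1 1 * ha
  rw [SL2_inv_expl]
  ext i j
  fin_cases i <;> fin_cases j <;> simp [hg, hdiag, CharTwo.neg_eq]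

theorem exists_inv_eq_upperUnipotent_mul_mul [CharP R 2] {g : SpecialLinearGroup (Fin 2) R}
    (hg : IsUnit (g 1 0)) : ∃ x, g⁻¹ = upperUnipotent R x * g * upperUnipotent R x := by
  have htwo : (2 : R) = 0 := CharTwo.two_eq_zero
  obtain ⟨x, hx⟩ : ∃ x, x * g 1 0 = g 0 0 + g 1 1 := by
    obtain ⟨y, hy⟩ := hg.exists_left_inv
    exact ⟨(g 0 0 + g 1 1) * y, by rw [mul_assoc, hy, mul_one]⟩
  refine ⟨.ofAdd x, ?_⟩
  rw [SL2_inv_expl]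
  ext i j
  fin_cases i <;> fin_cases j <;>
    simp [coe_upperUnipotent, Matrix.mul_apply, Matrix.vecMul, dotProduct, Fin.sum_univ_two]
  · linear_combination -hx - g 0 0 * htwo
  · linear_combination -x * hx - (g 0 1 + x * g 0 0 + x * g 1 1) * htwo
  · linear_combination -g 1 0 * htwo
  · linear_combination -hx - g 1 1 * htwo

theorem eq_top_of_upperUnipotent_range_le {F : Type*} [Field F]
    {N : Subgroup (SpecialLinearGroup (Fin 2) F)} [hN : N.Normal]
    (h : (upperUnipotent F).range ≤ N) : N = ⊤ := by
  have hupper : ∀ x : F, transvection zero_ne_one x ∈ N := fun x => h ⟨Multiplicative.ofAdd x, rfl⟩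
  have hlower : ∀ x : F, transvection one_ne_zero x ∈ N := by
    intro x
    obtain ⟨w, hw⟩ : ∃ w : SpecialLinearGroup (Fin 2) F, w.1 = !![0, 1; -1, 0] :=
      ⟨⟨!![0, 1; -1, 0], by simp⟩, rfl⟩
    have hconj : transvection one_ne_zero x = w * transvection zero_ne_one (-x) * w⁻¹ := by
      refine eq_mul_inv_of_mul_eq ?_
      ext i j
      fin_cases i <;> fin_cases j <;>
        simp [hw, transvection_coe, Matrix.mul_apply, Fin.sum_univ_two]
    exact hconj ▸ hN.conj_mem _ (hupper (-x)) w
  refine (Subgroup.eq_top_iff' N).2 (SL2.transvection_induction _ ?_ fun A B => N.mul_mem)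
  intro i j hij x
  fin_cases i <;> fin_cases j
  · exact absurd rfl hij
  · exact hupper x
  · exact hlower x
  · exact absurd rfl hij

section Equivariant

variable {k F : Type*} [Field k] [Field F] {f : SpecialLinearGroup (Fin 2) F → k}
  {ψ : Multiplicative F →* ℤˣ}

theorem apply_eq_zero_of_upperTriangular [NeZero (2 : k)] (hψ : ψ ≠ 1)
    (hleft : ∀ x g, f (upperUnipotent F x * g) = ψ x • f g)
    (hright : ∀ x g, f (g * upperUnipotent F x) = ψ x • f g) {g : SpecialLinearGroup (Fin 2) F}
    (hg : g 1 0 = 0) (ha : g 0 0 ^ 2 ≠ 1) : f g = 0 := by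
  obtain ⟨y, hy⟩ : ∃ y, ψ y ≠ 1 := by
    by_contra! h
    exact hψ (MonoidHom.ext h)
  let x := y.toAdd / (g 0 0 ^ 2 - 1)
  have hx : g 0 0 ^ 2 * x = y.toAdd + x := by
    have : x * (g 0 0 ^ 2 - 1) = y.toAdd := div_mul_cancel₀ _ (sub_ne_zero.2 ha)
    linear_combination this
  have hψf : ψ (.ofAdd x) • f g = ψ (.ofAdd x) • ψ y • f g := calc
    _ = f (upperUnipotent F (.ofAdd (g 0 0 ^ 2 * x)) * g) := by
      rw [← mul_upperUnipotent_of_upperTriangular hg, hright]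
    _ = _ := by rw [hleft, hx, add_comm, ofAdd_add, ofAdd_toAdd, map_mul, mul_smul]
  have hneg : f g = -f g := by
    simpa [(Int.units_eq_one_or (ψ y)).resolve_left hy] using smul_left_cancel _ hψf
  have : (2 : k) * f g = 0 := by linear_combination hneg
  exact (mul_eq_zero.1 this).resolve_left (NeZero.ne _)

theorem apply_inv_of_upperUnipotent_equivariant [CharP F 2] [NeZero (2 : k)] (hψ : ψ ≠ 1)
    (hleft : ∀ x g, f (upperUnipotent F x * g) = ψ x • f g)
    (hright : ∀ x g, f (g * upperUnipotent F x) = ψ x • f g) (g : SpecialLinearGroup (Fin 2) F) :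
    f g⁻¹ = f g := by
  by_cases hc : g 1 0 = 0
  · by_cases ha : g 0 0 ^ 2 = 1
    · rw [inv_eq_self_of_upperTriangular_of_sq_eq_one hc ha]
    · have hdet := mul_diag_eq_one_of_upperTriangular hc
      have hd : g 1 1 ^ 2 ≠ 1 := fun hd => ha (by
        linear_combination (g 0 0 * g 1 1 + 1) * hdet - g 0 0 ^ 2 * hd)
      rw [apply_eq_zero_of_upperTriangular hψ hleft hright hc ha,
        apply_eq_zero_of_upperTriangular hψ hleft hright]
      · simpa [SL2_inv_expl] using hc
      · rwa [SL2_inv_expl]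
  · obtain ⟨x, hx⟩ := exists_inv_eq_upperUnipotent_mul_mul (Ne.isUnit hc)
    rw [hx, hright, hleft, smul_smul, Int.units_mul_self, one_smul]

end Equivariant

end SpecialLinear

section EvenCharacteristic

variable {k F V : Type*} [Field k] [NeZero (2 : k)] [Field F] [Finite F] [CharP F 2]
  [AddCommGroup V] [Module k V]

theorem isOrthogonalRep_of_upperUnipotent_ne_one
    (π : Representation k (SpecialLinearGroup (Fin 2) F) V) [π.IsIrreducible]
    (hπ : ∃ x, π (upperUnipotent F x) ≠ 1) : IsOrthogonalRep π := by
  cases nonempty_fintype F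
  have hexp : Monoid.exponent (Multiplicative F) ∣ 2 :=
    Monoid.exponent_dvd_of_forall_pow_eq_one fun x => by
      rw [pow_two]
      exact CharTwo.add_self_eq_zero x.toAdd
  have : NeZero (Fintype.card (Multiplicative F) : k) := by
    obtain ⟨n, -, hcard⟩ := FiniteField.card F 2
    rw [Fintype.card_multiplicative, hcard, Nat.cast_pow, Nat.cast_two]
    infer_instance
  obtain ⟨ψ, hψ, v, l, hlv, hv, hl⟩ :=
    exists_sign_eigenvector (ρ := π.comp (upperUnipotent F)) hexp hπ
  refine IsOrthogonalRep.of_matrixCoeff_inv hlv <|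
    apply_inv_of_upperUnipotent_equivariant (f := fun g => l (π g v)) hψ
      (fun x g => ?_) fun x g => ?_
  · rw [map_mul]
    exact hl x _
  · rw [map_mul, Module.End.mul_apply, show π (upperUnipotent F x) v = ψ x • v from hv x]
    simp [Units.smul_def]

theorem isOrthogonalRep_sl2_of_isIrreducible (π : Representation k (SpecialLinearGroup (Fin 2) F) V)
    [π.IsIrreducible] : IsOrthogonalRep π := by
  by_cases hπ : ∃ x, π (upperUnipotent F x) ≠ 1
  · exact isOrthogonalRep_of_upperUnipotent_ne_one π hπ
  · push Not at hπ
    have hker : π.ker = ⊤ :=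
      eq_top_of_upperUnipotent_range_le (by rintro _ ⟨x, rfl⟩; exact hπ x)
    exact .of_forall_apply_eq_one fun g => MonoidHom.mem_ker.1 (hker ▸ Subgroup.mem_top g)

theorem sl2_even_char_all_reps_orthogonal_general
    (π : Representation k (SpecialLinearGroup (Fin 2) F) V) [π.IsSemisimpleRepresentation] :
    IsOrthogonalRep π :=
  .of_forall_isIrreducible π fun W _ => isOrthogonalRep_sl2_of_isIrreducible W.toRepresentation

end EvenCharacteristic

theorem sl2_even_char_all_reps_orthogonal
    {F : Type*} [Field F] [Fintype F]
    (hq : ∃ r : ℕ, 1 ≤ r ∧ Fintype.card F = 2 ^ r)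
    {V : Type*} [AddCommGroup V] [Module ℂ V] [FiniteDimensional ℂ V]
    (π : Representation ℂ (SpecialLinearGroup (Fin 2) F) V) :
    ∃ B : V →ₗ[ℂ] V →ₗ[ℂ] ℂ,
      (∀ v w : V, B v w = B w v) ∧
      (∀ (g : SpecialLinearGroup (Fin 2) F) (v w : V), B (π g v) (π g w) = B v w) ∧
      (∀ v : V, (∀ w : V, B v w = 0) → v = 0) := by
  obtain ⟨r, -, hcard⟩ := hq
  have : CharP F 2 := charP_of_card_eq_prime_pow hcard
  obtain ⟨B, hsymm, hinv, hnondeg⟩ := sl2_even_char_all_reps_orthogonal_general π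
  exact ⟨B, hsymm.eq, hinv, hnondeg.1⟩
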